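/- arXiv:2206.04160 — 2 statements merged into one kernel-verified Lean document; each statement's English description precedes it below -/
import Mathlib

section
/- Let H : ℝ^{m+n} → ℝ be convex, differentiable, and L₂-smooth with respect to the ℓ₂-norm, with a minimizer z* = argmin H. Let α_max be the maximum singular value of A ∈ ℝ^{m×n} and J = [[0, A],[−Aᵀ, 0]]. If (z_k) satisfies the backward method z_{k+1} = z_k − η J ∇H(z_{k+1}) with step size η > 0, then for all k ≥ 0: H(z_k) − H(z*) ≥ (H(z₀) − H(z*)) / (1 + η² α_max² L₂²)^k. -/
open RealInnerProductSpace Matrix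

/-!
Read backwards in time, a step of the method is `z k = z (k + 1) + η • J g` with
`g = ∇H (z (k + 1))`. As `J` is skew, `J g` is orthogonal to `g`, so the first-order term of the
descent inequality at `z (k + 1)` vanishes and
`H (z k) ≤ H (z (k + 1)) + (L / 2) * η² * α² * ‖g‖²`. Applied along the line through `g`, the same
inequality bounds `‖g‖²` by `2 * L * (H (z (k + 1)) - c)` for every lower bound `c` of `H`. Hence
each step divides the energy gap by at most `1 + η² * α² * L²`.
-/

section Smooth

open scoped NNReal Gradient

variable {E : Type*} [NormedAddCommGroup E] [InnerProductSpace ℝ E] {K : ℝ≥0}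

lemma inner_apply_add_smul_le_of_lipschitzWith {G : E → E} (hG : LipschitzWith K G) (x d : E)
    {t : ℝ} (ht : 0 ≤ t) : ⟪G (x + t • d), d⟫ ≤ ⟪G x, d⟫ + K * t * ‖d‖ ^ 2 := by
  have hnorm : ‖G (x + t • d) - G x‖ ≤ K * (t * ‖d‖) := by
    simpa [norm_smul, abs_of_nonneg ht] using hG.norm_sub_le (x + t • d) x
  calc ⟪G (x + t • d), d⟫ = ⟪G x, d⟫ + ⟪G (x + t • d) - G x, d⟫ := by rw [inner_sub_left]; ring
    _ ≤ ⟪G x, d⟫ + ‖G (x + t • d) - G x‖ * ‖d‖ := by gcongr; exact real_inner_le_norm _ _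
    _ ≤ ⟪G x, d⟫ + K * (t * ‖d‖) * ‖d‖ := by gcongr
    _ = ⟪G x, d⟫ + K * t * ‖d‖ ^ 2 := by ring

variable [CompleteSpace E] {H : E → ℝ}

lemma hasDerivAt_comp_add_smul {x d : E} {t : ℝ} (hH : DifferentiableAt ℝ H (x + t • d)) :
    HasDerivAt (fun s : ℝ ↦ H (x + s • d)) ⟪∇ H (x + t • d), d⟫ t := by
  have hline : HasDerivAt (fun s : ℝ ↦ x + s • d) d t := by
    simpa using ((hasDerivAt_id t).smul_const d).const_add x
  exact hH.hasGradientAt.hasFDerivAt.comp_hasDerivAt t hline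

lemma apply_add_le_of_lipschitzWith_gradient (hH : Differentiable ℝ H)
    (hlip : LipschitzWith K (∇ H)) (x d : E) :
    H (x + d) ≤ H x + ⟪∇ H x, d⟫ + K / 2 * ‖d‖ ^ 2 := by
  have hline (t : ℝ) : HasDerivAt (fun s : ℝ ↦ H (x + s • d)) ⟪∇ H (x + t • d), d⟫ t :=
    hasDerivAt_comp_add_smul (hH _)
  have hquad (t : ℝ) :
      HasDerivAt (fun s : ℝ ↦ H x + s * ⟪∇ H x, d⟫ + K / 2 * ‖d‖ ^ 2 * s ^ 2)
        (⟪∇ H x, d⟫ + K * t * ‖d‖ ^ 2) t := by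
    refine ((((hasDerivAt_id t).mul_const ⟪∇ H x, d⟫).const_add (H x)).add
      ((hasDerivAt_pow 2 t).const_mul (K / 2 * ‖d‖ ^ 2))).congr_deriv ?_
    push_cast
    ring
  have hle := image_le_of_deriv_right_le_deriv_boundary (a := 0) (b := 1)
    (fun t _ ↦ (hline t).continuousAt.continuousWithinAt)
    (fun t _ ↦ (hline t).hasDerivWithinAt) (by simp)
    (fun t _ ↦ (hquad t).continuousAt.continuousWithinAt)
    (fun t _ ↦ (hquad t).hasDerivWithinAt)
    (fun t ht ↦ inner_apply_add_smul_le_of_lipschitzWith hlip x d ht.1)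
    (Set.right_mem_Icc.mpr zero_le_one)
  simpa using hle

lemma norm_gradient_sq_le_of_lipschitzWith_gradient (hH : Differentiable ℝ H)
    (hlip : LipschitzWith K (∇ H)) {c : ℝ} (hc : ∀ x, c ≤ H x) (x : E) :
    ‖∇ H x‖ ^ 2 ≤ 2 * K * (H x - c) := by
  have hgap : 0 ≤ H x - c := sub_nonneg.mpr (hc x)
  rcases (sq_nonneg ‖∇ H x‖).eq_or_lt with hzero | hpos
  · rw [← hzero]
    positivity
  -- The discriminant, unlike the minimizing step `t = -1 / K`, also covers `K = 0`.
  have hquad (t : ℝ) :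
      0 ≤ K / 2 * ‖∇ H x‖ ^ 2 * (t * t) + ‖∇ H x‖ ^ 2 * t + (H x - c) := by
    have hdescent := apply_add_le_of_lipschitzWith_gradient hH hlip x (t • ∇ H x)
    rw [real_inner_smul_right, real_inner_self_eq_norm_sq, norm_smul, mul_pow, Real.norm_eq_abs,
      sq_abs] at hdescent
    linarith [hc (x + t • ∇ H x)]
  have hdiscrim := discrim_le_zero hquad
  rw [discrim] at hdiscrim
  refine le_of_mul_le_mul_right ?_ hpos
  linarith

lemma sub_le_mul_sub_of_backward_step (hH : Differentiable ℝ H) (hlip : LipschitzWith K (∇ H))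
    {c : ℝ} (hc : ∀ x, c ≤ H x) {x y v : E} {η α : ℝ} (hstep : y = x - η • v)
    (horth : ⟪∇ H y, v⟫ = 0) (hv : ‖v‖ ≤ α * ‖∇ H y‖) :
    H x - c ≤ (1 + η ^ 2 * α ^ 2 * K ^ 2) * (H y - c) := by
  have hdescent : H x ≤ H y + K / 2 * (η ^ 2 * ‖v‖ ^ 2) := by
    have h := apply_add_le_of_lipschitzWith_gradient hH hlip y (η • v)
    rwa [real_inner_smul_right, horth, mul_zero, add_zero, norm_smul, mul_pow, Real.norm_eq_abs,
      sq_abs, eq_sub_iff_add_eq.mp hstep] at h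
  calc H x - c ≤ H y - c + K / 2 * (η ^ 2 * ‖v‖ ^ 2) := by linarith
    _ ≤ H y - c + K / 2 * (η ^ 2 * (α * ‖∇ H y‖) ^ 2) := by gcongr
    _ = H y - c + K / 2 * (η ^ 2 * α ^ 2) * ‖∇ H y‖ ^ 2 := by ring
    _ ≤ H y - c + K / 2 * (η ^ 2 * α ^ 2) * (2 * K * (H y - c)) := by
      gcongr
      exact norm_gradient_sq_le_of_lipschitzWith_gradient hH hlip hc y
    _ = (1 + η ^ 2 * α ^ 2 * K ^ 2) * (H y - c) := by ring

theorem backward_method_energy_decrease_smooth_general (hH : Differentiable ℝ H) {L : ℝ}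
    (hsmooth : ∀ x y, ‖∇ H x - ∇ H y‖ ≤ L * ‖x - y‖) {c : ℝ} (hc : ∀ x, c ≤ H x)
    {J : E → E} (hJ_orth : ∀ g, ⟪g, J g⟫ = 0) {α : ℝ} (hJ_norm : ∀ g, ‖J g‖ ≤ α * ‖g‖)
    {η : ℝ} {z : ℕ → E} (hz : ∀ k, z (k + 1) = z k - η • J (∇ H (z (k + 1)))) (k : ℕ) :
    (H (z 0) - c) / (1 + η ^ 2 * α ^ 2 * L ^ 2) ^ k ≤ H (z k) - c := by
  have hlip : LipschitzWith (Real.nnabs L) (∇ H) := .of_dist_le_mul fun x y ↦ by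
    rw [dist_eq_norm, dist_eq_norm, Real.coe_nnabs]
    exact (hsmooth x y).trans (by gcongr; exact le_abs_self L)
  have hratio (j : ℕ) :
      (1 + η ^ 2 * α ^ 2 * L ^ 2)⁻¹ * (H (z j) - c) ≤ H (z (j + 1)) - c := by
    rw [inv_mul_le_iff₀ (by positivity)]
    simpa using sub_le_mul_sub_of_backward_step hH hlip hc (hz j) (hJ_orth _) (hJ_norm _)
  rw [div_eq_inv_mul, ← inv_pow]
  exact geom_le (u := fun j ↦ H (z j) - c) (by positivity) k fun j _ ↦ hratio j

end Smooth

section SkewMatrix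

variable {ι κ : Type*}

lemma transpose_fromBlocks_zero_neg_transpose_zero {R : Type*} [AddGroup R] (A : Matrix ι κ R) :
    (fromBlocks 0 A (-Aᵀ) 0)ᵀ = -fromBlocks 0 A (-Aᵀ) 0 := by
  simp [fromBlocks_transpose, fromBlocks_neg]

variable [Fintype ι] [Fintype κ]

lemma norm_sq_eq_add_norm_sq_inl_inr (x : EuclideanSpace ℝ (ι ⊕ κ)) :
    ‖x‖ ^ 2 = ‖WithLp.toLp 2 (x ∘ Sum.inl)‖ ^ 2 + ‖WithLp.toLp 2 (x ∘ Sum.inr)‖ ^ 2 := by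
  simp [EuclideanSpace.real_norm_sq_eq]

variable [DecidableEq ι] [DecidableEq κ]

lemma inner_toEuclideanLin_self_eq_zero_of_transpose_eq_neg {M : Matrix ι ι ℝ} (hM : Mᵀ = -M)
    (x : EuclideanSpace ℝ ι) : ⟪x, toEuclideanLin M x⟫ = 0 := by
  have hadj : (toEuclideanLin M).adjoint = -toEuclideanLin M := by
    rw [← toEuclideanLin_conjTranspose_eq_adjoint, conjTranspose_eq_transpose_of_trivial, hM,
      map_neg]
  have hneg : ⟪x, toEuclideanLin M x⟫ = -⟪x, toEuclideanLin M x⟫ :=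
    calc ⟪x, toEuclideanLin M x⟫ = ⟪(toEuclideanLin M).adjoint x, x⟫ :=
          ((toEuclideanLin M).adjoint_inner_left x x).symm
      _ = -⟪x, toEuclideanLin M x⟫ := by
          rw [hadj, LinearMap.neg_apply, inner_neg_left, real_inner_comm]
  exact self_eq_neg.mp hneg

lemma norm_toEuclideanLin_fromBlocks_antidiagonal_le {A : Matrix ι κ ℝ} {B : Matrix κ ι ℝ} {α : ℝ}
    (hα : 0 ≤ α) (hA : ∀ v, ‖toEuclideanLin A v‖ ≤ α * ‖v‖)
    (hB : ∀ v, ‖toEuclideanLin B v‖ ≤ α * ‖v‖) (x : EuclideanSpace ℝ (ι ⊕ κ)) :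
    ‖toEuclideanLin (fromBlocks 0 A B 0) x‖ ≤ α * ‖x‖ := by
  set u := WithLp.toLp 2 (x ∘ Sum.inl) with hu
  set v := WithLp.toLp 2 (x ∘ Sum.inr) with hv
  have hblocks : ‖toEuclideanLin (fromBlocks 0 A B 0) x‖ ^ 2 =
      ‖toEuclideanLin A v‖ ^ 2 + ‖toEuclideanLin B u‖ ^ 2 := by
    rw [norm_sq_eq_add_norm_sq_inl_inr]
    simp [toLpLin_apply, fromBlocks_mulVec, hu, hv]
  refine le_of_sq_le_sq ?_ (by positivity)
  calc ‖toEuclideanLin (fromBlocks 0 A B 0) x‖ ^ 2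
      = ‖toEuclideanLin A v‖ ^ 2 + ‖toEuclideanLin B u‖ ^ 2 := hblocks
    _ ≤ (α * ‖v‖) ^ 2 + (α * ‖u‖) ^ 2 := by gcongr <;> [exact hA v; exact hB u]
    _ = (α * ‖x‖) ^ 2 := by rw [mul_pow _ ‖x‖, norm_sq_eq_add_norm_sq_inl_inr x]; ring

end SkewMatrix

/-- **The backward method decreases the energy at most exponentially fast for smooth convex `H`.**
If `H` is convex and `L₂`-smooth, then along `z_{k+1} = z_k − η J ∇H(z_{k+1})` one has
`H(z_k) − H(z*) ≥ (H(z₀) − H(z*)) / (1 + η² α_max² L₂²)^k`. -/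
theorem backward_method_energy_decrease_smooth {m n : ℕ}
    (A : Matrix (Fin m) (Fin n) ℝ)
    (αmax : ℝ) (hαmax : 0 ≤ αmax)
    -- `αmax` is (an upper bound for) the maximum singular value of `A`
    (hA : ∀ v : EuclideanSpace ℝ (Fin n), ‖Matrix.toEuclideanLin A v‖ ≤ αmax * ‖v‖)
    (hAT : ∀ v : EuclideanSpace ℝ (Fin m), ‖Matrix.toEuclideanLin Aᵀ v‖ ≤ αmax * ‖v‖)
    (H : EuclideanSpace ℝ (Fin m ⊕ Fin n) → ℝ)
    (hH : Differentiable ℝ H) (hconv : ConvexOn ℝ Set.univ H)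
    (L₂ : ℝ)
    -- `H` is `L₂`-smooth with respect to the `ℓ₂`-norm
    (hsmooth : ∀ w w', ‖gradient H w - gradient H w'‖ ≤ L₂ * ‖w - w'‖)
    (zstar : EuclideanSpace ℝ (Fin m ⊕ Fin n)) (hmin : ∀ w, H zstar ≤ H w)
    (η : ℝ) (hη : 0 < η)
    (z : ℕ → EuclideanSpace ℝ (Fin m ⊕ Fin n))
    (hz : ∀ k, z (k+1) = z k -
      η • Matrix.toEuclideanLin (Matrix.fromBlocks 0 A (-Aᵀ) 0) (gradient H (z (k+1)))) :
    ∀ k : ℕ, (H (z 0) - H zstar) / (1 + η ^ 2 * αmax ^ 2 * L₂ ^ 2) ^ k ≤ H (z k) - H zstar := by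
  exact backward_method_energy_decrease_smooth_general hH hsmooth hmin
    (inner_toEuclideanLin_self_eq_zero_of_transpose_eq_neg
      (transpose_fromBlocks_zero_neg_transpose_zero A))
    (norm_toEuclideanLin_fromBlocks_antidiagonal_le hαmax hA (by simpa using hAT)) hz
end

section
/- Let f : ℝ^m → ℝ and g : ℝ^n → ℝ be differentiable convex functions, A ∈ ℝ^{m×n}, and let X : ℝ → ℝ^m, Y : ℝ → ℝ^n satisfy the skew-gradient flow X'(t) = −A ∇g(Y(t)), Y'(t) = Aᵀ ∇f(X(t)). Set P(t) = ∇f(X(t)), Q(t) = ∇g(Y(t)), and for arbitrary x̂ ∈ ℝ^m, ŷ ∈ ℝ^n set p̂ = ∇f(x̂), q̂ = ∇g(ŷ). Assume there is 0 < M < ∞ with D_f(X(0), x̂) ≤ M and D_g(Y(0), ŷ) ≤ M. Then the continuous-time cumulative regret satisfies R_T(p̂, q̂) = ∫₀ᵀ P(t)ᵀ A q̂ dt − ∫₀ᵀ p̂ᵀ A Q(t) dt ≤ 2M for all T ≥ 0. -/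
open RealInnerProductSpace Matrix

/-!
Along the flow, the total Bregman divergence `V t = D_f(X t, x̂) + D_g(Y t, ŷ)` has derivative
`⟪p̂, A Q⟫ - ⟪P, A q̂⟫`, because the terms `⟪P, A Q⟫` coming from the two equations cancel. So the
cumulative regret is exactly `V 0 - V T`, and `V T ≥ 0` by convexity. Integrability comes for free:
the gradient of a differentiable convex function is continuous.
-/

theorem norm_le_div_of_forall_inner_le {E : Type*} [NormedAddCommGroup E] [InnerProductSpace ℝ E]
    {w : E} {r c : ℝ} (hr : 0 < r) (h : ∀ v : E, ‖v‖ ≤ r → ⟪w, v⟫ ≤ c) : ‖w‖ ≤ c / r := by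
  rw [← innerSL_apply_norm ℝ w]
  refine ContinuousLinearMap.opNorm_bound_of_ball_bound hr c _ fun v hv ↦ ?_
  rw [mem_closedBall_zero_iff] at hv
  refine abs_le'.2 ⟨h v hv, ?_⟩
  simpa only [innerSL_apply_apply, inner_neg_right] using h (-v) (by rwa [norm_neg])

section Bregman

open Filter Topology Gradient

variable {E : Type*} [NormedAddCommGroup E] [InnerProductSpace ℝ E] [CompleteSpace E]
  {f : E → ℝ} {s : Set E} {x y : E}

/-- The Bregman divergence `D_f(y, x)`: the error at `y` of the first-order expansion of `f` at the
base point `x`, which is the second argument. It is meaningful only if `f` is differentiable at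
`x`, since `∇ f x` is `0` otherwise. -/
noncomputable def bregmanDiv (f : E → ℝ) (y x : E) : ℝ :=
  f y - f x - ⟪∇ f x, y - x⟫

theorem bregmanDiv_eq_add_add_inner (f : E → ℝ) (x y z : E) :
    bregmanDiv f z x = bregmanDiv f z y + bregmanDiv f y x + ⟪∇ f y - ∇ f x, z - y⟫ := by
  have split_displacement : ⟪∇ f x, z - x⟫ = ⟪∇ f x, z - y⟫ + ⟪∇ f x, y - x⟫ := by
    rw [← inner_add_right, sub_add_sub_cancel]
  simp only [bregmanDiv, split_displacement, inner_sub_left]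
  ring

theorem bregmanDiv_nonneg (hfc : ConvexOn ℝ s f) (hf : DifferentiableAt ℝ f x)
    (hx : x ∈ s) (hy : y ∈ s) : 0 ≤ bregmanDiv f y x := by
  let line : ℝ →ᵃ[ℝ] E := AffineMap.lineMap x y
  have line_zero : line 0 = x := AffineMap.lineMap_apply_zero x y
  have line_one : line 1 = y := AffineMap.lineMap_apply_one x y
  have deriv_zero : HasDerivAt (f ∘ line) ⟪∇ f x, y - x⟫ 0 :=
    hf.hasGradientAt.hasFDerivAt.comp_hasDerivAt_of_eq 0 AffineMap.hasDerivAt_lineMap line_zero.symm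
  have inner_le_slope : ⟪∇ f x, y - x⟫ ≤ slope (f ∘ line) 0 1 :=
    (hfc.comp_affineMap line).le_slope_of_hasDerivAt (by simpa [line_zero]) (by simpa [line_one])
      one_pos deriv_zero
  have slope_eq : slope (f ∘ line) 0 1 = f y - f x := by
    simp [slope_def_field, line_zero, line_one]
  rw [bregmanDiv]
  linarith

theorem bregmanDiv_isLittleO (hf : DifferentiableAt ℝ f x) :
    (fun y ↦ bregmanDiv f y x) =o[𝓝 x] fun y ↦ y - x :=
  hasGradientAt_iff_isLittleO.1 hf.hasGradientAt

theorem inner_gradient_sub_le_bregmanDiv {z : E} (hfc : ConvexOn ℝ s f)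
    (hfx : DifferentiableAt ℝ f x) (hfy : DifferentiableAt ℝ f y)
    (hx : x ∈ s) (hy : y ∈ s) (hz : z ∈ s) :
    ⟪∇ f y - ∇ f x, z - y⟫ ≤ bregmanDiv f z x := by
  have hzy := bregmanDiv_nonneg hfc hfy hy hz
  have hyx := bregmanDiv_nonneg hfc hfx hx hy
  rw [bregmanDiv_eq_add_add_inner f x y z]
  linarith

-- Testing `inner_gradient_sub_le_bregmanDiv` on all `z` in the ball of radius `δ` about `y` turns
-- the little-o bound on `bregmanDiv f z x` into a bound on `‖∇ f y - ∇ f x‖`.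
theorem continuousAt_gradient_of_convexOn (hfc : ConvexOn ℝ s f) (hs : s ∈ 𝓝 x)
    (hf : ∀ᶠ y in 𝓝 x, DifferentiableAt ℝ f y) : ContinuousAt (∇ f) x := by
  refine Metric.continuousAt_iff'.2 fun ε hε ↦ ?_
  have small : ∀ᶠ z in 𝓝 x, bregmanDiv f z x ≤ ε / 4 * ‖z - x‖ :=
    ((bregmanDiv_isLittleO hf.self_of_nhds).bound (by positivity : 0 < ε / 4)).mono
      fun z hz ↦ (le_abs_self _).trans hz
  obtain ⟨ρ, hρ, hball⟩ := Metric.eventually_nhds_iff_ball.1 (small.and hs)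
  filter_upwards [hf, hs, Metric.ball_mem_nhds x (by positivity : 0 < ρ / 3)] with y hfy hy hyx
  rw [mem_ball_iff_norm] at hyx
  have inner_le : ∀ v : E, ‖v‖ ≤ ρ / 3 → ⟪∇ f y - ∇ f x, v⟫ ≤ ρ / 3 * (ε / 2) := by
    intro v hv
    have norm_le : ‖y + v - x‖ ≤ 2 * (ρ / 3) := by
      rw [add_sub_right_comm]
      linarith [norm_add_le (y - x) v]
    obtain ⟨hbound, hmem⟩ := hball (y + v) (mem_ball_iff_norm.2 (by linarith))
    calc ⟪∇ f y - ∇ f x, v⟫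
        = ⟪∇ f y - ∇ f x, y + v - y⟫ := by rw [add_sub_cancel_left]
      _ ≤ bregmanDiv f (y + v) x :=
        inner_gradient_sub_le_bregmanDiv hfc hf.self_of_nhds hfy (mem_of_mem_nhds hs) hy hmem
      _ ≤ ε / 4 * ‖y + v - x‖ := hbound
      _ ≤ ε / 4 * (2 * (ρ / 3)) := by gcongr
      _ = ρ / 3 * (ε / 2) := by ring
  calc dist (∇ f y) (∇ f x)
      = ‖∇ f y - ∇ f x‖ := dist_eq_norm _ _
    _ ≤ ρ / 3 * (ε / 2) / (ρ / 3) := norm_le_div_of_forall_inner_le (by positivity) inner_le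
    _ = ε / 2 := by field_simp
    _ < ε := half_lt_self hε

theorem continuous_gradient_of_convexOn (hfc : ConvexOn ℝ Set.univ f) (hf : Differentiable ℝ f) :
    Continuous (∇ f) :=
  continuous_iff_continuousAt.2 fun _ ↦
    continuousAt_gradient_of_convexOn hfc Filter.univ_mem (.of_forall hf)

theorem hasDerivAt_bregmanDiv_comp {X : ℝ → E} {v : E} {t : ℝ}
    (hf : DifferentiableAt ℝ f (X t)) (hX : HasDerivAt X v t) (x : E) :
    HasDerivAt (fun τ ↦ bregmanDiv f (X τ) x) ⟪∇ f (X t) - ∇ f x, v⟫ t := by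
  have deriv_f : HasDerivAt (fun τ ↦ f (X τ)) ⟪∇ f (X t), v⟫ t :=
    hf.hasGradientAt.hasFDerivAt.comp_hasDerivAt t hX
  have deriv_linear : HasDerivAt (fun τ ↦ ⟪∇ f x, X τ - x⟫) ⟪∇ f x, v⟫ t :=
    (innerSL ℝ (∇ f x)).hasFDerivAt.comp_hasDerivAt t (hX.sub_const x)
  rw [inner_sub_left]
  exact (deriv_f.sub_const (f x)).sub deriv_linear

end Bregman

section SkewGradientFlow

open Gradient

variable {E F : Type*} [NormedAddCommGroup E] [InnerProductSpace ℝ E] [CompleteSpace E]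
  [NormedAddCommGroup F] [InnerProductSpace ℝ F] [CompleteSpace F]
  {f : E → ℝ} {g : F → ℝ} {A : F →L[ℝ] E} {X : ℝ → E} {Y : ℝ → F}

/-- The skew-gradient flow `X' = -A ∇g(Y)`, `Y' = A† ∇f(X)` on a pair of Hilbert spaces, the
dual-space form of continuous-time mirror descent. The trajectory is defined for all times. -/
structure IsSkewGradientFlow (f : E → ℝ) (g : F → ℝ) (A : F →L[ℝ] E) (X : ℝ → E) (Y : ℝ → F) :
    Prop where
  hasDerivAt_left : ∀ t, HasDerivAt X (-A (∇ g (Y t))) t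
  hasDerivAt_right : ∀ t, HasDerivAt Y (A.adjoint (∇ f (X t))) t

namespace IsSkewGradientFlow

theorem continuous_left (flow : IsSkewGradientFlow f g A X Y) : Continuous X :=
  continuous_iff_continuousAt.2 fun t ↦ (flow.hasDerivAt_left t).continuousAt

theorem continuous_right (flow : IsSkewGradientFlow f g A X Y) : Continuous Y :=
  continuous_iff_continuousAt.2 fun t ↦ (flow.hasDerivAt_right t).continuousAt

theorem hasDerivAt_bregmanDiv_add (flow : IsSkewGradientFlow f g A X Y) {t : ℝ}
    (hf : DifferentiableAt ℝ f (X t)) (hg : DifferentiableAt ℝ g (Y t)) (x : E) (y : F) :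
    HasDerivAt (fun τ ↦ bregmanDiv f (X τ) x + bregmanDiv g (Y τ) y)
      (⟪∇ f x, A (∇ g (Y t))⟫ - ⟪∇ f (X t), A (∇ g y)⟫) t := by
  refine ((hasDerivAt_bregmanDiv_comp hf (flow.hasDerivAt_left t) x).add
    (hasDerivAt_bregmanDiv_comp hg (flow.hasDerivAt_right t) y)).congr_deriv ?_
  rw [ContinuousLinearMap.adjoint_inner_right, map_sub, inner_neg_right, inner_sub_left,
    inner_sub_left, real_inner_comm (∇ f (X t)), real_inner_comm (∇ f (X t))]
  ring

theorem regret_eq_bregmanDiv_sub (flow : IsSkewGradientFlow f g A X Y)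
    (hf : Differentiable ℝ f) (hg : Differentiable ℝ g)
    (hf' : Continuous (∇ f)) (hg' : Continuous (∇ g)) (x : E) (y : F) (T : ℝ) :
    (∫ t in (0 : ℝ)..T, ⟪∇ f (X t), A (∇ g y)⟫) - (∫ t in (0 : ℝ)..T, ⟪∇ f x, A (∇ g (Y t))⟫) =
      (bregmanDiv f (X 0) x + bregmanDiv g (Y 0) y) -
        (bregmanDiv f (X T) x + bregmanDiv g (Y T) y) := by
  have cont_left : Continuous fun t ↦ ⟪∇ f (X t), A (∇ g y)⟫ :=
    (hf'.comp flow.continuous_left).inner continuous_const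
  have cont_right : Continuous fun t ↦ ⟪∇ f x, A (∇ g (Y t))⟫ :=
    continuous_const.inner (A.continuous.comp (hg'.comp flow.continuous_right))
  have ftc := intervalIntegral.integral_eq_sub_of_hasDerivAt
    (fun t _ ↦ flow.hasDerivAt_bregmanDiv_add (hf (X t)) (hg (Y t)) x y)
    ((cont_right.sub cont_left).intervalIntegrable 0 T)
  rw [intervalIntegral.integral_sub (cont_right.intervalIntegrable 0 T)
    (cont_left.intervalIntegrable 0 T)] at ftc
  linarith

end IsSkewGradientFlow

theorem continuous_time_regret_bound_general (flow : IsSkewGradientFlow f g A X Y)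
    (hf : Differentiable ℝ f) (hg : Differentiable ℝ g)
    (hfc : ConvexOn ℝ Set.univ f) (hgc : ConvexOn ℝ Set.univ g) (x : E) (y : F) (T : ℝ) :
    (∫ t in (0 : ℝ)..T, ⟪∇ f (X t), A (∇ g y)⟫) - (∫ t in (0 : ℝ)..T, ⟪∇ f x, A (∇ g (Y t))⟫) ≤
      bregmanDiv f (X 0) x + bregmanDiv g (Y 0) y := by
  rw [flow.regret_eq_bregmanDiv_sub hf hg (continuous_gradient_of_convexOn hfc hf)
    (continuous_gradient_of_convexOn hgc hg)]
  have hfT := bregmanDiv_nonneg hfc (hf x) (Set.mem_univ x) (Set.mem_univ (X T))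
  have hgT := bregmanDiv_nonneg hgc (hg y) (Set.mem_univ y) (Set.mem_univ (Y T))
  linarith

end SkewGradientFlow

theorem adjoint_toContinuousLinearMap_toEuclideanLin {m n : Type*} [Fintype m] [Fintype n]
    [DecidableEq m] [DecidableEq n] (A : Matrix m n ℝ) :
    A.toEuclideanLin.toContinuousLinearMap.adjoint = Aᵀ.toEuclideanLin.toContinuousLinearMap := by
  rw [← LinearMap.adjoint_toContinuousLinearMap, ← toEuclideanLin_conjTranspose_eq_adjoint,
    conjTranspose_eq_transpose_of_trivial]

/-- **Constant regret of the continuous-time method.**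
If `(X, Y)` follows the skew-gradient flow `X' = −A ∇g(Y)`, `Y' = Aᵀ ∇f(X)` with convex
differentiable `f, g`, and the initial Bregman divergences to the reference dual points are
bounded by `M`, then the continuous-time cumulative regret satisfies `R_T(p̂, q̂) ≤ 2M`
for all `T ≥ 0`. -/
theorem continuous_time_regret_bound {m n : ℕ}
    (f : EuclideanSpace ℝ (Fin m) → ℝ) (g : EuclideanSpace ℝ (Fin n) → ℝ)
    (hf : ContDiff ℝ 1 f) (hg : ContDiff ℝ 1 g)
    (hfc : ConvexOn ℝ Set.univ f) (hgc : ConvexOn ℝ Set.univ g)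
    (A : Matrix (Fin m) (Fin n) ℝ)
    (X : ℝ → EuclideanSpace ℝ (Fin m)) (Y : ℝ → EuclideanSpace ℝ (Fin n))
    (hX : ∀ t, HasDerivAt X (-(Matrix.toEuclideanLin A (gradient g (Y t)))) t)
    (hY : ∀ t, HasDerivAt Y (Matrix.toEuclideanLin Aᵀ (gradient f (X t))) t)
    (xh : EuclideanSpace ℝ (Fin m)) (yh : EuclideanSpace ℝ (Fin n))
    (M : ℝ) (hM : 0 < M)
    (hMf : f (X 0) - f xh - ⟪gradient f xh, X 0 - xh⟫ ≤ M)
    (hMg : g (Y 0) - g yh - ⟪gradient g yh, Y 0 - yh⟫ ≤ M) :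
    ∀ T ≥ (0:ℝ),
      (∫ t in (0:ℝ)..T, ⟪gradient f (X t), Matrix.toEuclideanLin A (gradient g yh)⟫) -
        (∫ t in (0:ℝ)..T, ⟪gradient f xh, Matrix.toEuclideanLin A (gradient g (Y t))⟫) ≤
      2 * M := by
  intro T _
  have flow : IsSkewGradientFlow f g A.toEuclideanLin.toContinuousLinearMap X Y :=
    ⟨hX, fun t ↦ by rw [adjoint_toContinuousLinearMap_toEuclideanLin]; exact hY t⟩
  exact (continuous_time_regret_bound_general flow (hf.differentiable one_ne_zero)
    (hg.differentiable one_ne_zero) hfc hgc xh yh T).trans (by unfold bregmanDiv; linarith)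
end
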